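/- arXiv:1503.08544 — 3 statements merged into one kernel-verified Lean document; each statement's English description precedes it below -/
import Mathlib

section
/- For all real numbers c and d, the polynomial maps F(x,y) = (x, xy + y⁵ + cy⁶ + dy⁷) and G(x,y) = (x, xy + y⁵ + (d − (5/8)c²)y⁷) have A⁷-equivalent 7-jets at the origin: j⁷F(0) ∼_{A⁷} j⁷G(0). -/
open Filter Topology

noncomputable section

/-- Directional derivative of a scalar function. -/
def dop (v : ℝ × ℝ) (g : ℝ × ℝ → ℝ) : ℝ × ℝ → ℝ :=
  fun p => fderiv ℝ g p v

/-- Partial derivative operator in the first coordinate. -/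
def pdx : (ℝ × ℝ → ℝ) → ℝ × ℝ → ℝ := dop (1, 0)

/-- Partial derivative operator in the second coordinate. -/
def pdy : (ℝ × ℝ → ℝ) → ℝ × ℝ → ℝ := dop (0, 1)

/-- Taylor coefficient `a_{ij} = ∂_x^i ∂_y^j g(0,0) / (i! j!)` of `g` at the origin. -/
def tcoeff (g : ℝ × ℝ → ℝ) (i j : ℕ) : ℝ :=
  (pdx^[i] (pdy^[j] g)) 0 / (Nat.factorial i * Nat.factorial j)

/-- The Jacobian determinant `λ_f` of a map `f : ℝ² → ℝ²`. -/
def jacDet (f : ℝ × ℝ → ℝ × ℝ) (p : ℝ × ℝ) : ℝ :=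
  (fderiv ℝ f p (1, 0)).1 * (fderiv ℝ f p (0, 1)).2 -
    (fderiv ℝ f p (1, 0)).2 * (fderiv ℝ f p (0, 1)).1

/-- `f` has corank one at `0` : the derivative of `f` at `0` has rank one. -/
def CorankOne (f : ℝ × ℝ → ℝ × ℝ) : Prop :=
  LinearMap.rank ((fderiv ℝ f 0).toLinearMap) = 1

/-- `η` is a null vector field for `f` near `0`. -/
def IsNullVF (f η : ℝ × ℝ → ℝ × ℝ) : Prop :=
  η 0 ≠ 0 ∧ ∃ U ∈ 𝓝 (0 : ℝ × ℝ),
    ContDiffOn ℝ (⊤ : ℕ∞) η U ∧ ∀ p ∈ U, jacDet f p = 0 → fderiv ℝ f p (η p) = 0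

/-- The derivative `(ηg)(p) = Dg(p)(η(p))` of `g` along the vector field `η`. -/
def etaD (η : ℝ × ℝ → ℝ × ℝ) (g : ℝ × ℝ → ℝ) : ℝ × ℝ → ℝ :=
  fun p => fderiv ℝ g p (η p)

/-- The iterated derivative `η^k g` along the vector field `η`. -/
def etaIter (η : ℝ × ℝ → ℝ × ℝ) : ℕ → (ℝ × ℝ → ℝ) → ℝ × ℝ → ℝ
  | 0, g => g
  | k + 1, g => etaD η (etaIter η k g)

/-- The Hessian matrix of second partial derivatives of `g` at `0`. -/
def hess (g : ℝ × ℝ → ℝ) : Matrix (Fin 2) (Fin 2) ℝ :=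
  !![pdx (pdx g) 0, pdx (pdy g) 0; pdy (pdx g) 0, pdy (pdy g) 0]

/-- `A^r`-equivalence of the `r`-jets at `0` of two map-germs `(ℝ²,0) → (ℝ²,0)`. -/
def JetEquiv (r : ℕ) (f g : ℝ × ℝ → ℝ × ℝ) : Prop :=
  ∃ φ ψ : ℝ × ℝ → ℝ × ℝ,
    ContDiff ℝ (⊤ : ℕ∞) φ ∧ ContDiff ℝ (⊤ : ℕ∞) ψ ∧ φ 0 = 0 ∧ ψ 0 = 0 ∧
    Function.Bijective (⇑(fderiv ℝ φ 0)) ∧ Function.Bijective (⇑(fderiv ℝ ψ 0)) ∧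
    ∀ i ≤ r, iteratedFDeriv ℝ i (ψ ∘ f ∘ φ) 0 = iteratedFDeriv ℝ i g 0

/-- `A`-equivalence of two map-germs `(ℝ²,0) → (ℝ²,0)`. -/
def AEquiv (f g : ℝ × ℝ → ℝ × ℝ) : Prop :=
  ∃ φ ψ : ℝ × ℝ → ℝ × ℝ,
    ContDiff ℝ (⊤ : ℕ∞) φ ∧ ContDiff ℝ (⊤ : ℕ∞) ψ ∧ φ 0 = 0 ∧ ψ 0 = 0 ∧
    Function.Bijective (⇑(fderiv ℝ φ 0)) ∧ Function.Bijective (⇑(fderiv ℝ ψ 0)) ∧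
    ∀ᶠ p in 𝓝 (0 : ℝ × ℝ), ψ (f (φ p)) = g p

/-- `f` has the form `(x, g(x,y))` where `g` is `C^∞` and the Taylor coefficients of `g`
of total degree `< N` at the origin are prescribed by `P`. -/
def HasForm (f : ℝ × ℝ → ℝ × ℝ) (g : ℝ × ℝ → ℝ) (N : ℕ) (P : ℕ → ℕ → ℝ) : Prop :=
  ContDiff ℝ (⊤ : ℕ∞) g ∧ (∀ p, f p = (p.1, g p)) ∧
    ∀ i j, i + j < N → tcoeff g i j = P i j

/-!
The unfoldings `(x, x y + h(y))` are permuted, up to `A`-equivalence, by the projective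
substitutions `h(y) ↦ (1 - a y) h(y / (1 - a y))`: the shear `(u, v) ↦ (u + a v, v)` of the target
is compensated by an explicit diffeomorphism of the source. On
`h = y ^ (m + 1) + c y ^ (m + 2) + d y ^ (m + 3)`, expanding negative powers of `1 - a y` to second
order replaces `c` by `c + m a`, so `a = -c / m` removes the term of degree `m + 2` and changes `d`
to `d - (m + 1) / (2 m) c ^ 2`. For `m = 4` the factor is `5 / 8`.
-/

open scoped ContDiff

section Jets

variable {𝕜 E F : Type*} [NontriviallyNormedField 𝕜] [NormedAddCommGroup E] [NormedSpace 𝕜 E]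
  [NormedAddCommGroup F] [NormedSpace 𝕜 F] {l : E → 𝕜} {A : E → F} {x : E} {n : ℕ∞ω} {i k : ℕ}

theorem iteratedFDeriv_pow_smul_eq_zero (hl : ContDiff 𝕜 n l) (hA : ContDiff 𝕜 n A)
    (hx : l x = 0) (hin : i ≤ n) (hik : i < k) :
    iteratedFDeriv 𝕜 i (fun p => l p ^ k • A p) x = 0 := by
  induction k generalizing i with
  | zero => omega
  | succ k ih =>
    have hlA : ContDiff 𝕜 n fun p => l p ^ k • A p := (hl.pow k).smul hA
    have leibniz := norm_iteratedFDeriv_smul_le hl hlA x hin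
    simp only [smul_smul, ← pow_succ'] at leibniz
    refine norm_le_zero_iff.mp (leibniz.trans_eq (Finset.sum_eq_zero fun j hj => ?_))
    rcases j.eq_zero_or_pos with rfl | hj_pos
    · simp [hx]
    · have hij : i - j < k := by
        rw [Finset.mem_range] at hj
        omega
      have hijn : ((i - j : ℕ) : ℕ∞ω) ≤ n := le_trans (mod_cast Nat.sub_le i j) hin
      simp [ih hijn hij]

theorem iteratedFDeriv_eq_of_eventuallyEq_add_pow_smul {f g : E → F} (hg : ContDiff 𝕜 n g)
    (hl : ContDiff 𝕜 n l) (hA : ContDiff 𝕜 n A) (hx : l x = 0)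
    (hfg : f =ᶠ[𝓝 x] fun p => g p + l p ^ k • A p) (hin : i ≤ n) (hik : i < k) :
    iteratedFDeriv 𝕜 i f x = iteratedFDeriv 𝕜 i g x := by
  have hlA : ContDiff 𝕜 n fun p => l p ^ k • A p := (hl.pow k).smul hA
  rw [(hfg.iteratedFDeriv 𝕜 i).eq_of_nhds, fun_iteratedFDeriv_add_apply (hg.of_le hin).contDiffAt
    (hlA.of_le hin).contDiffAt, iteratedFDeriv_pow_smul_eq_zero hl hA hx hin hik, add_zero]

end Jets

theorem AEquiv.jetEquiv {f g g' : ℝ × ℝ → ℝ × ℝ} {r : ℕ} (hfg : AEquiv f g)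
    (hg : ∀ i ≤ r, iteratedFDeriv ℝ i g 0 = iteratedFDeriv ℝ i g' 0) : JetEquiv r f g' := by
  obtain ⟨φ, ψ, hφ, hψ, hφ0, hψ0, hφ', hψ', h⟩ := hfg
  have heq : ψ ∘ f ∘ φ =ᶠ[𝓝 0] g := h
  exact ⟨φ, ψ, hφ, hψ, hφ0, hψ0, hφ', hψ', fun i hi =>
    (heq.iteratedFDeriv ℝ i).eq_of_nhds.trans (hg i hi)⟩

theorem exists_contDiff_eventuallyEq {E F : Type*} [NormedAddCommGroup E] [NormedSpace ℝ E]
    [HasContDiffBump E] [NormedAddCommGroup F] [NormedSpace ℝ F] {n : ℕ∞} {f : E → F} {x : E}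
    (hf : ∀ᶠ y in 𝓝 x, ContDiffAt ℝ n f y) : ∃ g, ContDiff ℝ n g ∧ g =ᶠ[𝓝 x] f := by
  obtain ⟨ε, hε, hball⟩ := Metric.nhds_basis_closedBall.eventually_iff.mp hf
  let b : ContDiffBump x := ⟨ε / 2, ε, half_pos hε, half_lt_self hε⟩
  refine ⟨fun y => b y • f y, contMDiff_iff_contDiff.mp (contMDiff_of_tsupport fun y hy => ?_), ?_⟩
  · have hyb : y ∈ Metric.closedBall x ε := b.tsupport_eq ▸ tsupport_smul_subset_left b f hy
    exact (b.contDiff.contDiffAt.smul (hball hyb)).contMDiffAt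
  · filter_upwards [b.eventuallyEq_one] with y hy
    simp [hy]

theorem eventually_one_sub_mul_ne_zero (a : ℝ) : ∀ᶠ y : ℝ in 𝓝 0, 1 - a * y ≠ 0 :=
  ContinuousAt.eventually_ne (by fun_prop) (by simp)

/-- The map `(x, y) ↦ (x, x y + h(y))`, the unfolding of the function `h` by the linear term `x y`;
both maps whose jets are compared are of this form. -/
def linearUnfolding (h : ℝ → ℝ) : ℝ × ℝ → ℝ × ℝ :=
  fun p => (p.1, p.1 * p.2 + h p.2)

theorem iteratedFDeriv_linearUnfolding_eq {h₁ h₂ R : ℝ → ℝ} {i k : ℕ} (hh₂ : ContDiff ℝ ∞ h₂)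
    (hR : ContDiff ℝ ∞ R) (hh : h₁ =ᶠ[𝓝 0] fun y => h₂ y + y ^ k * R y) (hi : i < k) :
    iteratedFDeriv ℝ i (linearUnfolding h₁) 0 = iteratedFDeriv ℝ i (linearUnfolding h₂) 0 := by
  refine iteratedFDeriv_eq_of_eventuallyEq_add_pow_smul (l := Prod.snd)
    (A := fun p => ((0 : ℝ), R p.2)) (by unfold linearUnfolding; fun_prop) contDiff_snd
    (n := ∞) (by fun_prop) rfl ?_ (by exact_mod_cast le_top) hi
  filter_upwards [(continuous_snd.tendsto (0 : ℝ × ℝ)).eventually hh] with p hp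
  ext
  · simp [linearUnfolding]
  · simp [linearUnfolding, hp, add_assoc]

/-- The shear `(x, y) ↦ (x + k y, y)` of the plane: the coordinate change used in the target, and
the derivative at the origin of the one used in the source. -/
def shear (k : ℝ) : (ℝ × ℝ) ≃L[ℝ] ℝ × ℝ :=
  ContinuousLinearEquiv.equivOfInverse
    ((ContinuousLinearMap.fst ℝ ℝ ℝ + k • ContinuousLinearMap.snd ℝ ℝ ℝ).prod
      (ContinuousLinearMap.snd ℝ ℝ ℝ))
    ((ContinuousLinearMap.fst ℝ ℝ ℝ - k • ContinuousLinearMap.snd ℝ ℝ ℝ).prod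
      (ContinuousLinearMap.snd ℝ ℝ ℝ))
    (fun p => by simp) (fun p => by simp)

theorem shear_apply (k : ℝ) (p : ℝ × ℝ) : shear k p = (p.1 + k * p.2, p.2) := rfl

/-- The action of the projective substitution `y ↦ y / (1 - a y)` on functions, with weight
`1 - a y`. Only its germ at `0` matters, so the junk value `y / 0 = 0` is never met. -/
def projSubst (a : ℝ) (h : ℝ → ℝ) (y : ℝ) : ℝ :=
  (1 - a * y) * h (y / (1 - a * y))

/-- The source coordinate change that compensates the target shear `shear a` in the unfolding of
`h`. Here `θ` stands for a smooth function with the germ of `y ↦ y / (1 - a y)` at `0`. -/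
def projSource (a : ℝ) (h θ : ℝ → ℝ) (p : ℝ × ℝ) : ℝ × ℝ :=
  ((1 - a * p.2) * (p.1 - a * h (θ p.2)), θ p.2)

theorem shear_linearUnfolding_projSource {a : ℝ} {h θ : ℝ → ℝ} {p : ℝ × ℝ}
    (hp : 1 - a * p.2 ≠ 0) (hθ : θ p.2 = p.2 / (1 - a * p.2)) :
    shear a (linearUnfolding h (projSource a h θ p)) = linearUnfolding (projSubst a h) p := by
  ext
  · simp only [shear_apply, linearUnfolding, projSource, hθ]
    field_simp
    ring
  · simp only [shear_apply, linearUnfolding, projSource, projSubst, hθ]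
    field_simp
    ring

theorem hasFDerivAt_projSource {a h' : ℝ} {h θ : ℝ → ℝ} (hh : HasDerivAt h h' 0) (h0 : h 0 = 0)
    (hθ : HasDerivAt θ 1 0) (hθ0 : θ 0 = 0) :
    HasFDerivAt (projSource a h θ) (shear (-(a * h')) : ℝ × ℝ →L[ℝ] ℝ × ℝ) 0 := by
  have hsnd : HasFDerivAt Prod.snd (ContinuousLinearMap.snd ℝ ℝ ℝ) (0 : ℝ × ℝ) := hasFDerivAt_snd
  have hθ_snd := hθ.comp_hasFDerivAt (0 : ℝ × ℝ) hsnd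
  have hhθ_snd := (hθ0 ▸ hh).comp_hasFDerivAt (0 : ℝ × ℝ) hθ_snd
  refine ((((hsnd.const_mul a).const_sub 1).mul
    (hasFDerivAt_fst.sub (hhθ_snd.const_mul a))).prodMk hθ_snd).congr_fderiv ?_
  ext <;> simp [shear_apply, hθ0, h0]

theorem aequiv_linearUnfolding_projSubst (a : ℝ) {h : ℝ → ℝ} (hh : ContDiff ℝ ∞ h)
    (h0 : h 0 = 0) : AEquiv (linearUnfolding h) (linearUnfolding (projSubst a h)) := by
  have hne := eventually_one_sub_mul_ne_zero a
  obtain ⟨θ, hθ, hθ_eq⟩ := exists_contDiff_eventuallyEq (n := ⊤)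
    (f := fun y : ℝ => y / (1 - a * y)) (hne.mono fun y hy => contDiffAt_id.div (by fun_prop) hy)
  have hθ0 : θ 0 = 0 := by simp [hθ_eq.eq_of_nhds]
  have hθ' : HasDerivAt θ 1 0 := by
    have hden : HasDerivAt (fun y => 1 - a * y) (-a) 0 := by
      simpa using ((hasDerivAt_id (0 : ℝ)).const_mul a).const_sub 1
    simpa using ((hasDerivAt_id (0 : ℝ)).div hden (by simp)).congr_of_eventuallyEq hθ_eq
  have hh' := (hh.differentiable (by simp) 0).hasDerivAt
  refine ⟨projSource a h θ, shear a, by unfold projSource; fun_prop, (shear a).contDiff,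
    by simp [projSource, hθ0, h0], map_zero _, ?_, ?_, ?_⟩
  · rw [(hasFDerivAt_projSource hh' h0 hθ' hθ0).fderiv]
    exact (shear _).bijective
  · rw [(shear a).fderiv]
    exact (shear a).bijective
  · filter_upwards [(continuous_snd.tendsto (0 : ℝ × ℝ)).eventually (hne.and hθ_eq)]
      with p ⟨hp, hθp⟩
    exact shear_linearUnfolding_projSource hp hθp

theorem exists_inv_one_sub_mul_pow_eq (a : ℝ) (m : ℕ) : ∃ R : ℝ → ℝ, ContDiff ℝ ∞ R ∧
    ∀ᶠ y in 𝓝 0, (1 - a * y)⁻¹ ^ m =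
      1 + m * a * y + m * (m + 1) / 2 * a ^ 2 * y ^ 2 + y ^ 3 * R y := by
  have hne := eventually_one_sub_mul_ne_zero a
  obtain ⟨u, hu, hu_eq⟩ := exists_contDiff_eventuallyEq (n := ⊤) (f := fun y : ℝ => (1 - a * y)⁻¹)
    (hne.mono fun y hy => ContDiffAt.inv (by fun_prop) hy)
  induction m with
  | zero => exact ⟨0, contDiff_const, by simp⟩
  | succ m ih =>
    obtain ⟨R, hR, hpow⟩ := ih
    refine ⟨fun y => u y * (R y + (m + 1) * (m + 2) / 2 * a ^ 3), by fun_prop, ?_⟩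
    filter_upwards [hne, hu_eq, hpow] with y hy huy hpowy
    rw [huy, pow_succ, hpowy]
    push_cast
    linear_combination (1 + (m + 1) * a * y + (m + 1) * (m + 2) / 2 * a ^ 2 * y ^ 2) *
      inv_mul_cancel₀ hy

theorem exists_projSubst_pow_eventuallyEq (a c d : ℝ) (m : ℕ) : ∃ R : ℝ → ℝ, ContDiff ℝ ∞ R ∧
    projSubst a (fun y => y ^ (m + 1) + c * y ^ (m + 2) + d * y ^ (m + 3)) =ᶠ[𝓝 0] fun y =>
      y ^ (m + 1) + (c + m * a) * y ^ (m + 2) +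
        (d + (m + 1) * a * c + m * (m + 1) / 2 * a ^ 2) * y ^ (m + 3) + y ^ (m + 4) * R y := by
  obtain ⟨R₀, hR₀, h₀⟩ := exists_inv_one_sub_mul_pow_eq a m
  obtain ⟨R₁, hR₁, h₁⟩ := exists_inv_one_sub_mul_pow_eq a (m + 1)
  obtain ⟨R₂, hR₂, h₂⟩ := exists_inv_one_sub_mul_pow_eq a (m + 2)
  refine ⟨fun y => R₀ y + c * ((m + 1) * (m + 2) / 2 * a ^ 2 + y * R₁ y) +
    d * ((m + 2) * a + (m + 2) * (m + 3) / 2 * a ^ 2 * y + y ^ 2 * R₂ y), by fun_prop, ?_⟩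
  filter_upwards [eventually_one_sub_mul_ne_zero a, h₀, h₁, h₂] with y hy hy₀ hy₁ hy₂
  have hcancel : projSubst a (fun y => y ^ (m + 1) + c * y ^ (m + 2) + d * y ^ (m + 3)) y =
      y ^ (m + 1) * ((1 - a * y)⁻¹ ^ m + c * y * (1 - a * y)⁻¹ ^ (m + 1) +
        d * y ^ 2 * (1 - a * y)⁻¹ ^ (m + 2)) := by
    simp only [projSubst, div_eq_mul_inv, mul_pow, pow_succ]
    field_simp
  rw [hcancel, hy₀, hy₁, hy₂]
  push_cast
  ring

theorem stmt2_general {m : ℕ} (hm : m ≠ 0) (c d : ℝ) :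
    JetEquiv (m + 3)
      (fun p => (p.1, p.1 * p.2 + p.2 ^ (m + 1) + c * p.2 ^ (m + 2) + d * p.2 ^ (m + 3)))
      (fun p => (p.1,
        p.1 * p.2 + p.2 ^ (m + 1) + (d - (m + 1) / (2 * m) * c ^ 2) * p.2 ^ (m + 3))) := by
  have hm' : (m : ℝ) ≠ 0 := Nat.cast_ne_zero.mpr hm
  have hc : c + m * (-c / m) = 0 := by field_simp; ring
  have hd : d + (m + 1) * (-c / m) * c + m * (m + 1) / 2 * (-c / m) ^ 2 =
      d - (m + 1) / (2 * m) * c ^ 2 := by field_simp; ring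
  obtain ⟨R, hR, hjet⟩ := exists_projSubst_pow_eventuallyEq (-c / m) c d m
  simp only [hc, hd, zero_mul, add_zero] at hjet
  have hequiv := (aequiv_linearUnfolding_projSubst (-c / m) (by fun_prop) (by simp)).jetEquiv
    fun i hi => iteratedFDeriv_linearUnfolding_eq (by fun_prop) hR hjet (Nat.lt_succ_of_le hi)
  simp only [add_assoc] at hequiv ⊢
  exact hequiv

theorem stmt2 (c d : ℝ) :
    JetEquiv 7 (fun p => (p.1, p.1 * p.2 + p.2 ^ 5 + c * p.2 ^ 6 + d * p.2 ^ 7))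
      (fun p => (p.1, p.1 * p.2 + p.2 ^ 5 + (d - 5 / 8 * c ^ 2) * p.2 ^ 7)) := by
  convert stmt2_general four_ne_zero c d using 5
  norm_num
end
end

section
/- For all real numbers c and d, the polynomial maps F(x,y) = (x, xy² + y⁴ + cy⁶ + dy⁷) and G(x,y) = (x, xy² + y⁴ + dy⁷) have A⁷-equivalent 7-jets at the origin: j⁷F(0) ∼_{A⁷} j⁷G(0). -/
open Filter Topology

noncomputable section

/-!
Scale the source by `y ↦ b y` and the target by `Y ↦ Y / W`, leaving the first coordinate alone.
If `b² = W (1 - k y²)`, with `W` and `k` functions of `x`, the coefficients of `y⁴` and `y⁶` in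
`(x (b y)² + (b y)⁴ + c (b y)⁶) / W - (x y² + y⁴)` are `W - 1 - x k` and `W (c W - 2 k)`.
Both vanish for `W = (1 - c x / 2)⁻¹` and `k = c W / 2`. Only the terms of total degree at most
seven matter, so `√W`, `k` and `√(1 - u)` may be replaced by polynomials with the right low-order
terms. The quadratic Taylor polynomial of `√W` has no real zero, so the target scaling stays smooth
on the whole plane.
-/

section VanishesToOrder

variable {𝕜 E F A : Type*} [NontriviallyNormedField 𝕜] [NormedAddCommGroup E] [NormedSpace 𝕜 E]
  [NormedAddCommGroup F] [NormedSpace 𝕜 F] [NormedRing A] [NormedAlgebra 𝕜 A]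
  {f g : E → F} {u v : E → A} {x : E} {m n : ℕ}

variable (𝕜) in
/-- `f` is smooth and all its derivatives of order `< n` vanish at `x`, i.e. its `(n - 1)`-jet at
`x` is zero. Smoothness is bundled because the product rule needs it. -/
structure VanishesToOrder (n : ℕ) (f : E → F) (x : E) : Prop where
  contDiff : ContDiff 𝕜 (⊤ : ℕ∞) f
  iteratedFDeriv_eq_zero : ∀ i < n, iteratedFDeriv 𝕜 i f x = 0

lemma VanishesToOrder.of_contDiff (hf : ContDiff 𝕜 (⊤ : ℕ∞) f) : VanishesToOrder 𝕜 0 f x :=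
  ⟨hf, fun _ hi => absurd hi (Nat.not_lt_zero _)⟩

lemma VanishesToOrder.of_apply_eq_zero (hf : ContDiff 𝕜 (⊤ : ℕ∞) f) (hx : f x = 0) :
    VanishesToOrder 𝕜 1 f x := by
  refine ⟨hf, fun i hi => ?_⟩
  obtain rfl : i = 0 := Nat.lt_one_iff.mp hi
  ext w
  simp [hx]

lemma VanishesToOrder.add (hf : VanishesToOrder 𝕜 n f x) (hg : VanishesToOrder 𝕜 n g x) :
    VanishesToOrder 𝕜 n (fun z => f z + g z) x := by
  refine ⟨hf.contDiff.add hg.contDiff, fun i hi => ?_⟩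
  have hle : (i : WithTop ℕ∞) ≤ (⊤ : ℕ∞) := by exact_mod_cast le_top
  rw [fun_iteratedFDeriv_add_apply (hf.contDiff.of_le hle).contDiffAt
    (hg.contDiff.of_le hle).contDiffAt, hf.iteratedFDeriv_eq_zero i hi,
    hg.iteratedFDeriv_eq_zero i hi, add_zero]

lemma VanishesToOrder.iteratedFDeriv_eq (hfg : VanishesToOrder 𝕜 n (fun z => f z - g z) x)
    (hg : ContDiff 𝕜 (⊤ : ℕ∞) g) {i : ℕ} (hi : i < n) :
    iteratedFDeriv 𝕜 i f x = iteratedFDeriv 𝕜 i g x := by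
  have hle : (i : WithTop ℕ∞) ≤ (⊤ : ℕ∞) := by exact_mod_cast le_top
  have hf : f = fun z => (f z - g z) + g z := by simp only [sub_add_cancel]
  rw [hf, fun_iteratedFDeriv_add_apply (hfg.contDiff.of_le hle).contDiffAt
    (hg.of_le hle).contDiffAt, hfg.iteratedFDeriv_eq_zero i hi, zero_add]

lemma VanishesToOrder.mul (hu : VanishesToOrder 𝕜 m u x) (hv : VanishesToOrder 𝕜 n v x) :
    VanishesToOrder 𝕜 (m + n) (fun z => u z * v z) x := by
  refine ⟨hu.contDiff.mul hv.contDiff, fun i hi => norm_le_zero_iff.mp ?_⟩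
  have hle : (i : WithTop ℕ∞) ≤ (⊤ : ℕ∞) := by exact_mod_cast le_top
  refine (norm_iteratedFDeriv_mul_le hu.contDiff hv.contDiff x hle).trans_eq
    (Finset.sum_eq_zero fun j hji => ?_)
  rw [Finset.mem_range] at hji
  rcases lt_or_ge j m with hj | hj
  · simp [hu.iteratedFDeriv_eq_zero j hj]
  · simp [hv.iteratedFDeriv_eq_zero (i - j) (by omega)]

lemma VanishesToOrder.pow (hu : VanishesToOrder 𝕜 1 u x) (k : ℕ) :
    VanishesToOrder 𝕜 k (fun z => u z ^ k) x := by
  induction k with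
  | zero => simpa only [pow_zero] using of_contDiff contDiff_const
  | succ k ih => simpa only [pow_succ] using ih.mul hu

lemma VanishesToOrder.mul_contDiff (hu : VanishesToOrder 𝕜 n u x)
    (hv : ContDiff 𝕜 (⊤ : ℕ∞) v) : VanishesToOrder 𝕜 n (fun z => u z * v z) x :=
  hu.mul (of_contDiff hv)

lemma vanishesToOrder_fst : VanishesToOrder 𝕜 1 (Prod.fst : E × F → E) 0 :=
  .of_apply_eq_zero contDiff_fst rfl

lemma vanishesToOrder_snd : VanishesToOrder 𝕜 1 (Prod.snd : E × F → F) 0 :=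
  .of_apply_eq_zero contDiff_snd rfl

end VanishesToOrder

section FiberScale

variable {𝕜 E F : Type*} [NontriviallyNormedField 𝕜] [NormedAddCommGroup E]
  [NormedAddCommGroup F] [NormedSpace 𝕜 F] {h : E × F → 𝕜}

/-- The map `(x, y) ↦ (x, h (x, y) • y)`, used as a coordinate change over the identity in `x`. -/
def fiberScale (h : E × F → 𝕜) (p : E × F) : E × F :=
  (p.1, h p • p.2)

lemma fiberScale_zero : fiberScale h 0 = 0 := by
  simp [fiberScale]

variable [NormedSpace 𝕜 E]

lemma contDiff_fiberScale {n : WithTop ℕ∞} (hh : ContDiff 𝕜 n h) :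
    ContDiff 𝕜 n (fiberScale h) :=
  contDiff_fst.prodMk (hh.smul contDiff_snd)

lemma hasFDerivAt_fiberScale {x : E} (hh : DifferentiableAt 𝕜 h (x, 0)) :
    HasFDerivAt (fiberScale h)
      ((ContinuousLinearMap.fst 𝕜 E F).prod (h (x, 0) • ContinuousLinearMap.snd 𝕜 E F)) (x, 0) := by
  refine (hasFDerivAt_fst.prodMk (hh.hasFDerivAt.smul hasFDerivAt_snd)).congr_fderiv ?_
  ext <;> simp

lemma bijective_fderiv_fiberScale {x : E} (hh : DifferentiableAt 𝕜 h (x, 0))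
    (hx : h (x, 0) ≠ 0) : Function.Bijective (fderiv 𝕜 (fiberScale h) (x, 0)) := by
  rw [(hasFDerivAt_fiberScale hh).fderiv]
  exact Function.bijective_id.prodMap (MulAction.bijective₀ hx)

end FiberScale

lemma jetEquiv_of_fiberScale {r : ℕ} {f g h k : ℝ × ℝ → ℝ} (hg : ContDiff ℝ (⊤ : ℕ∞) g)
    (hh : ContDiff ℝ (⊤ : ℕ∞) h) (hk : ContDiff ℝ (⊤ : ℕ∞) k) (hh0 : h 0 ≠ 0) (hk0 : k 0 ≠ 0)
    (hfg : VanishesToOrder ℝ (r + 1)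
      (fun p => k (p.1, f (fiberScale h p)) * f (fiberScale h p) - g p) 0) :
    JetEquiv r (fun p => (p.1, f p)) (fun p => (p.1, g p)) := by
  refine ⟨fiberScale h, fiberScale k, contDiff_fiberScale hh, contDiff_fiberScale hk,
    fiberScale_zero, fiberScale_zero,
    bijective_fderiv_fiberScale (hh.differentiable (by simp) 0) hh0,
    bijective_fderiv_fiberScale (hk.differentiable (by simp) 0) hk0, fun i hi => ?_⟩
  have hle : (i : WithTop ℕ∞) ≤ (⊤ : ℕ∞) := by exact_mod_cast le_top
  have hcomp : ContDiff ℝ (⊤ : ℕ∞)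
      (fun p => k (p.1, f (fiberScale h p)) * f (fiberScale h p)) := by
    simpa only [sub_add_cancel] using hfg.contDiff.add hg
  calc iteratedFDeriv ℝ i (fiberScale k ∘ (fun p => (p.1, f p)) ∘ fiberScale h) 0
      = (iteratedFDeriv ℝ i Prod.fst 0).prod (iteratedFDeriv ℝ i
          (fun p => k (p.1, f (fiberScale h p)) * f (fiberScale h p)) 0) :=
        iteratedFDeriv_prodMk contDiff_fst.contDiffAt hcomp.contDiffAt hle
    _ = (iteratedFDeriv ℝ i Prod.fst 0).prod (iteratedFDeriv ℝ i g 0) := by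
        rw [hfg.iteratedFDeriv_eq hg (Nat.lt_succ_of_le hi)]
    _ = iteratedFDeriv ℝ i (fun p => (p.1, g p)) 0 :=
        (iteratedFDeriv_prodMk contDiff_fst.contDiffAt hg.contDiffAt hle).symm

/-- The Taylor polynomial of degree two of `√(1 - u)`. -/
def sqrtOneSub (u : ℝ) : ℝ :=
  1 - u / 2 - u ^ 2 / 8

/-- The Taylor polynomial of degree two of `√W`, where `W = (1 - c x / 2)⁻¹`. -/
def sqrtWeight (c x : ℝ) : ℝ :=
  1 + c * x / 4 + 3 / 32 * (c * x) ^ 2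

/-- The coefficient `k` in the source scaling. It agrees with `c W / 2` only up to first order
in `x`; its quadratic term is instead chosen so that `1 + x k` agrees with the square of
`sqrtWeight c x` up to third order. -/
def sourceSlope (c x : ℝ) : ℝ :=
  c / 2 * (1 + c * x / 2 + 3 / 32 * (c * x) ^ 2)

/-- The factor `b` by which the source coordinate `y` is multiplied. -/
def sourceFactor (c : ℝ) (p : ℝ × ℝ) : ℝ :=
  sqrtWeight c p.1 * sqrtOneSub (sourceSlope c p.1 * p.2 ^ 2)

lemma sqrtOneSub_sq (u : ℝ) : sqrtOneSub u ^ 2 = 1 - u + u ^ 3 * ((8 + u) / 64) := by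
  unfold sqrtOneSub
  ring

lemma sqrtWeight_pos (c x : ℝ) : 0 < sqrtWeight c x := by
  unfold sqrtWeight
  nlinarith [sq_nonneg (c * x + 4 / 3)]

lemma sqrtWeight_sq (c x : ℝ) :
    sqrtWeight c x ^ 2 = 1 + x * sourceSlope c x + x ^ 4 * (9 / 1024 * c ^ 4) := by
  unfold sqrtWeight sourceSlope
  ring

lemma mul_sqrtWeight_sq (c x : ℝ) :
    c * sqrtWeight c x ^ 2 =
      2 * sourceSlope c x + x ^ 2 * (c ^ 3 * (160 + 48 * (c * x) + 9 * (c * x) ^ 2) / 1024) := by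
  unfold sqrtWeight sourceSlope
  ring

@[fun_prop]
lemma contDiff_sqrtOneSub {n : WithTop ℕ∞} : ContDiff ℝ n sqrtOneSub := by
  unfold sqrtOneSub
  fun_prop

@[fun_prop]
lemma contDiff_sqrtWeight {n : WithTop ℕ∞} (c : ℝ) : ContDiff ℝ n (sqrtWeight c) := by
  unfold sqrtWeight
  fun_prop

@[fun_prop]
lemma contDiff_sourceSlope {n : WithTop ℕ∞} (c : ℝ) : ContDiff ℝ n (sourceSlope c) := by
  unfold sourceSlope
  fun_prop

lemma contDiff_sourceFactor {n : WithTop ℕ∞} (c : ℝ) : ContDiff ℝ n (sourceFactor c) := by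
  unfold sourceFactor
  fun_prop

lemma sourceFactor_zero (c : ℝ) : sourceFactor c 0 = 1 := by
  simp [sourceFactor, sqrtWeight, sqrtOneSub]

-- `e`, `ε` and `ρ` are the errors made by replacing `√W`, `k` and `√(1 - u)` by polynomials.
lemma scaled_sub_eq_of_expansions {R : Type*} [CommRing R] {c x y W k e ε τ ρ : R}
    (hW : W = 1 + x * k + x ^ 4 * e) (hcW : c * W = 2 * k + x ^ 2 * ε)
    (hτ : τ = 1 - k * y ^ 2 + (k * y ^ 2) ^ 3 * ρ) :
    x * y ^ 2 * τ + y ^ 4 * W * τ ^ 2 + c * y ^ 6 * W ^ 2 * τ ^ 3 - (x * y ^ 2 + y ^ 4) =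
      x ^ 4 * y ^ 4 * e + x ^ 2 * y ^ 6 * (W * ε) +
        y ^ 8 * (x * k ^ 3 * ρ
          + W * k ^ 2 * (1 + 2 * (k * y ^ 2) * ρ * (1 - k * y ^ 2) + (k * y ^ 2) ^ 4 * ρ ^ 2)
          - c * k * W ^ 2 * (1 - (k * y ^ 2) ^ 2 * ρ) * (τ ^ 2 + τ + 1)) := by
  have hW' : y ^ 4 * (W - 1 - x * k) = x ^ 4 * y ^ 4 * e := by rw [hW]; ring
  have hcW' : y ^ 6 * W * (c * W - 2 * k) = x ^ 2 * y ^ 6 * (W * ε) := by rw [hcW]; ring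
  rw [← hW', ← hcW', hτ]
  ring

lemma vanishesToOrder_scaled_sub (c : ℝ) :
    VanishesToOrder ℝ 8 (fun p : ℝ × ℝ =>
      p.1 * p.2 ^ 2 * sqrtOneSub (sourceSlope c p.1 * p.2 ^ 2) ^ 2
        + p.2 ^ 4 * sqrtWeight c p.1 ^ 2 * (sqrtOneSub (sourceSlope c p.1 * p.2 ^ 2) ^ 2) ^ 2
        + c * p.2 ^ 6 * (sqrtWeight c p.1 ^ 2) ^ 2
          * (sqrtOneSub (sourceSlope c p.1 * p.2 ^ 2) ^ 2) ^ 3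
        - (p.1 * p.2 ^ 2 + p.2 ^ 4)) 0 := by
  have hx : VanishesToOrder ℝ 1 (fun p : ℝ × ℝ => p.1) 0 := vanishesToOrder_fst
  have hy : VanishesToOrder ℝ 1 (fun p : ℝ × ℝ => p.2) 0 := vanishesToOrder_snd
  simp only [scaled_sub_eq_of_expansions (sqrtWeight_sq _ _) (mul_sqrtWeight_sq _ _)
    (sqrtOneSub_sq _)]
  refine .add (.add (((hx.pow 4).mul (hy.pow 4)).mul_contDiff contDiff_const)
    (((hx.pow 2).mul (hy.pow 6)).mul_contDiff (by fun_prop)))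
    ((hy.pow 8).mul_contDiff (by fun_prop))

theorem stmt9 (c d : ℝ) :
    JetEquiv 7 (fun p => (p.1, p.1 * p.2 ^ 2 + p.2 ^ 4 + c * p.2 ^ 6 + d * p.2 ^ 7))
      (fun p => (p.1, p.1 * p.2 ^ 2 + p.2 ^ 4 + d * p.2 ^ 7)) := by
  refine jetEquiv_of_fiberScale (h := sourceFactor c) (k := fun q => (sqrtWeight c q.1 ^ 2)⁻¹)
    (f := fun p => p.1 * p.2 ^ 2 + p.2 ^ 4 + c * p.2 ^ 6 + d * p.2 ^ 7)
    (by fun_prop) (contDiff_sourceFactor c)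
    (ContDiff.inv (by fun_prop) fun q => pow_ne_zero 2 (sqrtWeight_pos c q.1).ne')
    (by simp [sourceFactor_zero]) (inv_ne_zero (pow_ne_zero 2 (sqrtWeight_pos c _).ne')) ?_
  have hd : VanishesToOrder ℝ 8 (fun p : ℝ × ℝ => p.2 ^ 7 *
      (sqrtWeight c p.1 ^ 5 * sqrtOneSub (sourceSlope c p.1 * p.2 ^ 2) ^ 7 - 1) * d) 0 := by
    refine ((vanishesToOrder_snd.pow 7).mul (.of_apply_eq_zero ?_ ?_)).mul_contDiff contDiff_const
    · fun_prop
    · simp [sqrtWeight, sqrtOneSub]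
  convert (vanishesToOrder_scaled_sub c).add hd using 2 with p
  have hw := (sqrtWeight_pos c p.1).ne'
  simp only [fiberScale, sourceFactor, smul_eq_mul]
  field_simp
  ring
end
end

section
/- For all real numbers c and d, the polynomial maps F(x,y) = (x, xy² + y⁴ + cy⁸ + dy⁹) and G(x,y) = (x, xy² + y⁴ + dy⁹) have A⁹-equivalent 9-jets at the origin: j⁹F(0) ∼_{A⁹} j⁹G(0). -/
/-!
Write `c = 2e` and `P = xy² + y⁴`. Modulo terms of degree at least `10`, the source change
`(x, y) ↦ (x, y + exy³)` turns the second component of `F` into `P(1 + eP)² + dy⁹`. The series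
inverse of `t ↦ t(1 + et)²` begins `t - 2et² + 7e²t³`; since `P` has order `3` and `dy⁹` has order
`9`, applying this cubic in the target leaves `P + dy⁹`, because the terms in `P⁴`,
`P · dy⁹` and `(dy⁹)²` all have degree at least `10`.
-/

open Filter Topology

noncomputable section

section VanishingOrder

open scoped Manifold ContDiff

variable {𝕜 E : Type*} [NontriviallyNormedField 𝕜] [NormedAddCommGroup E] [NormedSpace 𝕜 E]

theorem iteratedFDeriv_mul_eq_zero {A : Type*} [NormedRing A] [NormedAlgebra 𝕜 A] {f g : E → A}
    {a : E} {m n i : ℕ} (hf : ContDiff 𝕜 i f) (hg : ContDiff 𝕜 i g)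
    (hfm : ∀ j < m, iteratedFDeriv 𝕜 j f a = 0) (hgn : ∀ j < n, iteratedFDeriv 𝕜 j g a = 0)
    (hi : i < m + n) : iteratedFDeriv 𝕜 i (f * g) a = 0 := by
  rw [← norm_le_zero_iff]
  refine (norm_iteratedFDeriv_mul_le hf hg a le_rfl).trans (Finset.sum_eq_zero fun j hj ↦ ?_).le
  have hji : j ≤ i := Finset.mem_range_succ_iff.mp hj
  obtain hjm | hjn : j < m ∨ i - j < n := by omega
  · simp [hfm j hjm]
  · simp [hgn (i - j) hjn]

theorem contDiff_coe_natCast (f : C^∞⟮𝓘(𝕜, E), E; 𝕜⟯) (i : ℕ) : ContDiff 𝕜 i f :=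
  f.contMDiff.contDiff.of_le (mod_cast le_top)

/-- The ideal of smooth functions vanishing at `a` together with all their derivatives of order
less than `n`, so that two smooth functions have the same `r`-jet at `a` exactly when they are
congruent modulo `vanishingOrderIdeal a (r + 1)`. -/
def vanishingOrderIdeal (a : E) (n : ℕ) : Ideal C^∞⟮𝓘(𝕜, E), E; 𝕜⟯ where
  carrier := {f | ∀ i < n, iteratedFDeriv 𝕜 i f a = 0}
  zero_mem' i _ := congrFun iteratedFDeriv_fun_zero a
  add_mem' {f g} hf hg i hi := by
    rw [ContMDiffMap.coe_add, iteratedFDeriv_add_apply (contDiff_coe_natCast f i).contDiffAt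
      (contDiff_coe_natCast g i).contDiffAt, hf i hi, hg i hi, add_zero]
  smul_mem' c f hf i hi :=
    iteratedFDeriv_mul_eq_zero (m := 0) (contDiff_coe_natCast c i) (contDiff_coe_natCast f i)
      (by simp) hf (by simpa using hi)

variable {a : E} {f g : C^∞⟮𝓘(𝕜, E), E; 𝕜⟯}

theorem mem_vanishingOrderIdeal_one : f ∈ vanishingOrderIdeal a 1 ↔ f a = 0 := by
  refine ⟨fun hf ↦ by simpa using DFunLike.congr_fun (hf 0 one_pos) 0, fun hf i hi ↦ ?_⟩
  obtain rfl : i = 0 := by omega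
  ext
  simpa using hf

theorem mul_mem_vanishingOrderIdeal {m n : ℕ} (hf : f ∈ vanishingOrderIdeal a m)
    (hg : g ∈ vanishingOrderIdeal a n) : f * g ∈ vanishingOrderIdeal a (m + n) := fun i ↦
  iteratedFDeriv_mul_eq_zero (contDiff_coe_natCast f i) (contDiff_coe_natCast g i) hf hg

theorem pow_mem_vanishingOrderIdeal (hf : f a = 0) (n : ℕ) :
    f ^ n ∈ vanishingOrderIdeal a n := by
  induction n with
  | zero => exact fun _ hi ↦ absurd hi (Nat.not_lt_zero _)
  | succ n ih =>
    rw [pow_succ]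
    exact mul_mem_vanishingOrderIdeal ih (mem_vanishingOrderIdeal_one.mpr hf)

theorem mk_vanishingOrderIdeal_eq_iff {n : ℕ} :
    Ideal.Quotient.mk (vanishingOrderIdeal a n) f = Ideal.Quotient.mk _ g ↔
      ∀ i < n, iteratedFDeriv 𝕜 i f a = iteratedFDeriv 𝕜 i g a := by
  refine Ideal.Quotient.eq.trans (forall₂_congr fun i _ ↦ ?_)
  rw [ContMDiffMap.coe_sub, iteratedFDeriv_sub_apply (contDiff_coe_natCast f i).contDiffAt
    (contDiff_coe_natCast g i).contDiffAt, sub_eq_zero]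

end VanishingOrder

theorem bijective_fderiv_fst_prodMk {𝕜 : Type*} [NontriviallyNormedField 𝕜] {α : 𝕜 × 𝕜 → 𝕜}
    {a : 𝕜 × 𝕜} (hα : DifferentiableAt 𝕜 α a) (hα' : deriv (fun t ↦ α (a.1, t)) a.2 ≠ 0) :
    Function.Bijective (fderiv 𝕜 (fun p ↦ (p.1, α p)) a) := by
  have hderiv : deriv (fun t ↦ α (a.1, t)) a.2 = fderiv 𝕜 α a (0, 1) :=
    (hα.hasFDerivAt.comp_hasDerivAt a.2
      ((hasDerivAt_const a.2 a.1).prodMk (hasDerivAt_id a.2))).deriv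
  rw [hderiv] at hα'
  rw [(hasFDerivAt_fst.prodMk hα.hasFDerivAt).fderiv]
  suffices hinj : Function.Injective ((ContinuousLinearMap.fst 𝕜 𝕜 𝕜).prod (fderiv 𝕜 α a)) from
    ⟨hinj, LinearMap.injective_iff_surjective.mp hinj⟩
  refine (injective_iff_map_eq_zero _).mpr fun ⟨u, v⟩ huv ↦ ?_
  obtain ⟨rfl, hv⟩ : u = 0 ∧ fderiv 𝕜 α a (u, v) = 0 := Prod.ext_iff.mp huv
  have hsmul : ((0, v) : 𝕜 × 𝕜) = v • (0, 1) := by simp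
  rw [hsmul, map_smul, smul_eq_mul, mul_eq_zero, or_iff_left hα'] at hv
  rw [hv, Prod.mk_zero_zero]

theorem JetEquiv.of_fst_prodMk {r : ℕ} {f g α β : ℝ × ℝ → ℝ} (hf : ContDiff ℝ (⊤ : ℕ∞) f)
    (hg : ContDiff ℝ (⊤ : ℕ∞) g) (hα : ContDiff ℝ (⊤ : ℕ∞) α) (hβ : ContDiff ℝ (⊤ : ℕ∞) β)
    (hα₀ : α 0 = 0) (hβ₀ : β 0 = 0) (hα' : deriv (fun t ↦ α (0, t)) 0 ≠ 0)
    (hβ' : deriv (fun t ↦ β (0, t)) 0 ≠ 0)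
    (h : ∀ i ≤ r, iteratedFDeriv ℝ i (fun p ↦ β (p.1, f (p.1, α p))) 0 = iteratedFDeriv ℝ i g 0) :
    JetEquiv r (fun p ↦ (p.1, f p)) (fun p ↦ (p.1, g p)) := by
  refine ⟨fun p ↦ (p.1, α p), fun p ↦ (p.1, β p), contDiff_fst.prodMk hα, contDiff_fst.prodMk hβ,
    by simp [hα₀], by simp [hβ₀],
    bijective_fderiv_fst_prodMk (hα.differentiable (by simp) 0) hα',
    bijective_fderiv_fst_prodMk (hβ.differentiable (by simp) 0) hβ', fun i hi ↦ ?_⟩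
  have hcomp : ContDiff ℝ (⊤ : ℕ∞) (fun p : ℝ × ℝ ↦ β (p.1, f (p.1, α p))) := by fun_prop
  have hi_top : (i : WithTop ℕ∞) ≤ (⊤ : ℕ∞) := mod_cast le_top
  change iteratedFDeriv ℝ i (fun p ↦ (p.1, β (p.1, f (p.1, α p)))) 0 = _
  rw [iteratedFDeriv_prodMk contDiffAt_fst hcomp.contDiffAt hi_top, h i hi,
    iteratedFDeriv_prodMk contDiffAt_fst hg.contDiffAt hi_top]

theorem mul_pow_eq_left {M : Type*} [Monoid M] {a u : M} (h : a * u = a) (n : ℕ) :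
    a * u ^ n = a := by
  induction n with
  | zero => rw [pow_zero, mul_one]
  | succ n ih => rw [pow_succ, ← mul_assoc, ih, h]

section NormalForm

variable {R : Type*} [CommRing R]

/-- The second component of the germ `(x, xy² + y⁴ + cy⁸ + dy⁹)`, over a commutative ring so that
`c`, `d`, `x`, `y` can be numbers, smooth functions or jets of functions. -/
def gullForm (c d x y : R) : R := x * y ^ 2 + y ^ 4 + c * y ^ 8 + d * y ^ 9

/-- The second component of the source coordinate change `(x, y) ↦ (x, y + exy³)`. -/
def sourceShear (e x y : R) : R := y + e * x * y ^ 3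

/-- The truncation after degree three of the compositional inverse of `t ↦ t(1 + et)²`, used as
coordinate change in the target. -/
def targetCubic (e t : R) : R := t - 2 * e * t ^ 2 + 7 * e ^ 2 * t ^ 3

theorem map_targetCubic_gullForm_sourceShear {S : Type*} [CommRing S] (f : R →+* S)
    (e d x y : R) :
    f (targetCubic e (gullForm (2 * e) d x (sourceShear e x y))) =
      targetCubic (f e) (gullForm (2 * f e) (f d) (f x) (sourceShear (f e) (f x) (f y))) := by
  simp [targetCubic, gullForm, sourceShear, map_ofNat f]

theorem targetCubic_mul_one_add_sq {t : R} (ht : t ^ 4 = 0) (e : R) :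
    targetCubic e (t * (1 + e * t) ^ 2) = t := by
  unfold targetCubic
  linear_combination (30 * e ^ 3 + 97 * e ^ 4 * t + 138 * e ^ 5 * t ^ 2 + 105 * e ^ 6 * t ^ 3
    + 42 * e ^ 7 * t ^ 4 + 7 * e ^ 8 * t ^ 5) * ht

theorem targetCubic_add {t w : R} (htw : t * w = 0) (hw : w ^ 2 = 0) (e : R) :
    targetCubic e (t + w) = targetCubic e t + w := by
  unfold targetCubic
  linear_combination (21 * e ^ 2 * (t + w) - 4 * e) * htw + (7 * e ^ 2 * w - 2 * e) * hw

variable {x y : R}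

theorem gullForm_sourceShear (hx : x ^ 2 * y ^ 8 = 0) (hy : y ^ 10 = 0) (e d : R) :
    gullForm (2 * e) d x (sourceShear e x y) =
      (x * y ^ 2 + y ^ 4) * (1 + e * (x * y ^ 2 + y ^ 4)) ^ 2 + d * y ^ 9 := by
  have hfactor : sourceShear e x y = y * (1 + e * x * y ^ 2) := by unfold sourceShear; ring
  have h8 : sourceShear e x y ^ 8 = y ^ 8 := by
    rw [hfactor, mul_pow, mul_pow_eq_left]
    linear_combination e * x * hy
  have h9 : sourceShear e x y ^ 9 = y ^ 9 := by
    rw [hfactor, mul_pow, mul_pow_eq_left]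
    linear_combination e * x * y * hy
  rw [gullForm, h8, h9, hfactor]
  linear_combination (3 * e ^ 2 + 4 * e ^ 3 * x * y ^ 2 + e ^ 4 * x ^ 2 * y ^ 4) * hx
    - e ^ 2 * (3 * x + y ^ 2) * hy

theorem targetCubic_gullForm_sourceShear (hx : x ^ 2 * y ^ 8 = 0) (hy : y ^ 10 = 0) (e d : R) :
    targetCubic e (gullForm (2 * e) d x (sourceShear e x y)) =
      x * y ^ 2 + y ^ 4 + d * y ^ 9 := by
  have ht : (x * y ^ 2 + y ^ 4) ^ 4 = 0 := by
    linear_combination (x ^ 2 + 4 * x * y ^ 2 + 6 * y ^ 4) * hx + (4 * x * y ^ 4 + y ^ 6) * hy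
  have htw : (x * y ^ 2 + y ^ 4) * (1 + e * (x * y ^ 2 + y ^ 4)) ^ 2 * (d * y ^ 9) = 0 := by
    linear_combination (1 + e * (x * y ^ 2 + y ^ 4)) ^ 2 * d * (x * y + y ^ 3) * hy
  have hw : (d * y ^ 9) ^ 2 = 0 := by
    linear_combination d ^ 2 * y ^ 8 * hy
  rw [gullForm_sourceShear hx hy, targetCubic_add htw hw, targetCubic_mul_one_add_sq ht]

end NormalForm

section Jets

open scoped Manifold ContDiff

variable {𝕜 E : Type*} [NontriviallyNormedField 𝕜] [NormedAddCommGroup E] [NormedSpace 𝕜 E] {a : E}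

theorem deriv_targetCubic_zero (e : 𝕜) : deriv (fun t ↦ targetCubic e t) 0 = 1 := by
  simp only [targetCubic]
  rw [deriv_fun_add (by fun_prop) (by fun_prop), deriv_fun_sub (by fun_prop) (by fun_prop)]
  simp

theorem mk_targetCubic_gullForm_sourceShear {x y : C^∞⟮𝓘(𝕜, E), E; 𝕜⟯} (hx : x a = 0)
    (hy : y a = 0) (e d : C^∞⟮𝓘(𝕜, E), E; 𝕜⟯) :
    Ideal.Quotient.mk (vanishingOrderIdeal a 10)
        (targetCubic e (gullForm (2 * e) d x (sourceShear e x y))) =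
      Ideal.Quotient.mk _ (x * y ^ 2 + y ^ 4 + d * y ^ 9) := by
  let π := Ideal.Quotient.mk (vanishingOrderIdeal (𝕜 := 𝕜) a 10)
  have hxy₁₀ : π x ^ 2 * π y ^ 8 = 0 := by
    rw [← map_pow, ← map_pow, ← map_mul, Ideal.Quotient.eq_zero_iff_mem]
    exact mul_mem_vanishingOrderIdeal (pow_mem_vanishingOrderIdeal hx 2)
      (pow_mem_vanishingOrderIdeal hy 8)
  have hy₁₀ : π y ^ 10 = 0 := by
    rw [← map_pow, Ideal.Quotient.eq_zero_iff_mem]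
    exact pow_mem_vanishingOrderIdeal hy 10
  rw [map_targetCubic_gullForm_sourceShear, targetCubic_gullForm_sourceShear hxy₁₀ hy₁₀]
  simp only [map_add, map_mul, map_pow, π]

theorem iteratedFDeriv_targetCubic_gullForm_sourceShear {x y e d : E → 𝕜} (hx : ContDiff 𝕜 ∞ x)
    (hy : ContDiff 𝕜 ∞ y) (he : ContDiff 𝕜 ∞ e) (hd : ContDiff 𝕜 ∞ d) (hxa : x a = 0)
    (hya : y a = 0) {i : ℕ} (hi : i < 10) :
    iteratedFDeriv 𝕜 i (fun p ↦ targetCubic (e p)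
        (gullForm (2 * e p) (d p) (x p) (sourceShear (e p) (x p) (y p)))) a =
      iteratedFDeriv 𝕜 i (fun p ↦ x p * y p ^ 2 + y p ^ 4 + d p * y p ^ 9) a := by
  let X : C^∞⟮𝓘(𝕜, E), E; 𝕜⟯ := ⟨x, hx.contMDiff⟩
  let Y : C^∞⟮𝓘(𝕜, E), E; 𝕜⟯ := ⟨y, hy.contMDiff⟩
  let e' : C^∞⟮𝓘(𝕜, E), E; 𝕜⟯ := ⟨e, he.contMDiff⟩
  let d' : C^∞⟮𝓘(𝕜, E), E; 𝕜⟯ := ⟨d, hd.contMDiff⟩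
  have heval : ⇑(targetCubic e' (gullForm (2 * e') d' X (sourceShear e' X Y))) = fun p ↦
      targetCubic (e p) (gullForm (2 * e p) (d p) (x p) (sourceShear (e p) (x p) (y p))) :=
    funext fun p ↦ map_targetCubic_gullForm_sourceShear (ContMDiffMap.evalRingHom p) e' d' X Y
  rw [← heval]
  exact mk_vanishingOrderIdeal_eq_iff.mp
    (mk_targetCubic_gullForm_sourceShear (x := X) (y := Y) hxa hya e' d') i hi

end Jets

theorem stmt10 (c d : ℝ) :
    JetEquiv 9 (fun p => (p.1, p.1 * p.2 ^ 2 + p.2 ^ 4 + c * p.2 ^ 8 + d * p.2 ^ 9))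
      (fun p => (p.1, p.1 * p.2 ^ 2 + p.2 ^ 4 + d * p.2 ^ 9)) := by
  obtain ⟨e, rfl⟩ : ∃ e, c = 2 * e := ⟨c / 2, by ring⟩
  refine JetEquiv.of_fst_prodMk (α := fun p ↦ sourceShear e p.1 p.2)
    (β := fun p ↦ targetCubic e p.2) (by fun_prop) (by fun_prop)
    (by unfold sourceShear; fun_prop) (by unfold targetCubic; fun_prop)
    (by simp [sourceShear]) (by simp [targetCubic])
    (by simp [sourceShear]) (by simp [deriv_targetCubic_zero]) fun i hi ↦ ?_
  exact iteratedFDeriv_targetCubic_gullForm_sourceShear contDiff_fst contDiff_snd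
    contDiff_const contDiff_const rfl rfl (Nat.lt_succ_of_le hi)
end
end
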